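/- arXiv:2402.13285 — 2 statements merged into one kernel-verified Lean document; each statement's English description precedes it below -/
import Mathlib

section
/- Computable Catoni bound with a sampled prior hypothesis: For any probability measure D on Z, any loss ℓ : H × Z → [0,1], any prior density P on H, any measurable parametric function μ : H × Z^m → ℝ with finite positive Gibbs normalizer, any fixed c > 0, and any δ ∈ (0,1], with probability at least 1−δ over S ∼ D^m, h′ ∼ P, and h ∼ Q_S (Gibbs posterior for μ) one has R_D^ℓ(h) ≤ (1/(1−e^{−c}))·{ 1 − exp( −c·R_S^ℓ(h) − (1/m)·[ μ(h′,S) − μ(h,S) + ln(P(h′)/P(h)) + ln(4/δ²) ] ) }. -/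
open MeasureTheory ProbabilityTheory

/-- The true risk `R_D^ℓ(h) = E_{z∼D} ℓ(h,z)`. -/
noncomputable def trueRisk {H Z : Type*} [MeasurableSpace Z]
    (D : Measure Z) (ℓ : H → Z → ℝ) (h : H) : ℝ :=
  ∫ z, ℓ h z ∂D

/-- The empirical risk `R_S^ℓ(h) = (1/m) Σ_{i=1}^m ℓ(h,z_i)`. -/
noncomputable def empRisk {H Z : Type*} {m : ℕ}
    (ℓ : H → Z → ℝ) (h : H) (S : Fin m → Z) : ℝ :=
  (∑ i, ℓ h (S i)) / m

/-!
Let `E h S = exp (-c * ∑ i, ℓ h (S i)) / (1 - (1 - exp (-c)) * R_D h) ^ m`. For each fixed `h`,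
convexity of `exp` and independence give `𝔼_S (E h S) ≤ 1`. Let `ρ_S = dQ_S/dP`. Changing measure
from `Q_S` to `P`, the variable `E h S / ρ_S h` with `h ∼ Q_S` has mean at most `1`, while `ρ_S h'`
with `h' ∼ P` has mean `1`. By Cauchy–Schwarz and Markov, the product of two such variables exceeds
`1 / δ ^ 2` with probability at most `δ`. The unknown normalizer `Z_S` cancels in `ρ_S h' / ρ_S h`,
and taking logarithms turns the complementary event into the bound, with `log (1 / δ ^ 2)` in place
of `log (4 / δ ^ 2)`.
-/

section Markov

variable {α : Type*} [MeasurableSpace α] {μ : Measure α} {f g : α → ENNReal}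

lemma measure_inv_sq_le_mul_le (hf : AEMeasurable f μ) (hg : AEMeasurable g μ)
    (hf_one : ∫⁻ x, f x ∂μ ≤ 1) (hg_one : ∫⁻ x, g x ∂μ ≤ 1) (δ : ENNReal) :
    μ {x | δ⁻¹ ^ 2 ≤ f x * g x} ≤ δ := by
  have sqrt_mean : ∫⁻ x, f x ^ (1 / 2 : ℝ) * g x ^ (1 / 2 : ℝ) ∂μ ≤ 1 :=
    (ENNReal.lintegral_mul_norm_pow_le hf hg (by norm_num) (by norm_num) (by norm_num)).trans <|
      mul_le_one' (ENNReal.rpow_le_one hf_one (by norm_num))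
        (ENNReal.rpow_le_one hg_one (by norm_num))
  have sqrt_event : {x | δ⁻¹ ^ 2 ≤ f x * g x} ⊆
      {x | δ⁻¹ ≤ f x ^ (1 / 2 : ℝ) * g x ^ (1 / 2 : ℝ)} := by
    intro x (hx : δ⁻¹ ^ 2 ≤ f x * g x)
    calc δ⁻¹ = (δ⁻¹ ^ 2) ^ (1 / 2 : ℝ) := by rw [← ENNReal.rpow_natCast_mul]; norm_num
      _ ≤ (f x * g x) ^ (1 / 2 : ℝ) := by gcongr
      _ = f x ^ (1 / 2 : ℝ) * g x ^ (1 / 2 : ℝ) := ENNReal.mul_rpow_of_nonneg _ _ (by norm_num)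
  have markov : μ {x | δ⁻¹ ≤ f x ^ (1 / 2 : ℝ) * g x ^ (1 / 2 : ℝ)} * δ⁻¹ ≤ 1 := by
    rw [mul_comm]
    exact (mul_meas_ge_le_lintegral₀ ((hf.pow_const _).mul (hg.pow_const _)) _).trans sqrt_mean
  exact (measure_mono sqrt_event).trans <|
    (ENNReal.le_inv_iff_mul_le.2 markov).trans_eq (inv_inv δ)

end Markov

section ChangeOfMeasure

variable {Ω H : Type*} [MeasurableSpace Ω] [MeasurableSpace H]
  {ν : Measure Ω} {π : Measure H} {κ : Kernel Ω H} {ρ : Ω → H → ENNReal} {E : H → Ω → ENNReal}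

lemma lintegral_compProd_div_density_le [SFinite ν] [SFinite π] [IsSFiniteKernel κ]
    (hρ : Measurable (Function.uncurry ρ)) (hE : Measurable (Function.uncurry E))
    (hκ : ∀ ω, κ ω = π.withDensity (ρ ω)) :
    ∫⁻ x, E x.2 x.1 / ρ x.1 x.2 ∂(ν ⊗ₘ κ) ≤ ∫⁻ h, ∫⁻ ω, E h ω ∂ν ∂π := by
  have hE_swap : Measurable fun x : Ω × H => E x.2 x.1 := hE.comp measurable_swap
  have hquot : Measurable fun x : Ω × H => E x.2 x.1 / ρ x.1 x.2 := hE_swap.div hρ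
  calc ∫⁻ x, E x.2 x.1 / ρ x.1 x.2 ∂(ν ⊗ₘ κ)
      = ∫⁻ ω, ∫⁻ h, ρ ω h * (E h ω / ρ ω h) ∂π ∂ν := by
        rw [Measure.lintegral_compProd hquot]
        refine lintegral_congr fun ω => ?_
        rw [hκ ω]
        exact lintegral_withDensity_eq_lintegral_mul _ hρ.of_uncurry_left
          (hquot.comp measurable_prodMk_left)
    _ ≤ ∫⁻ ω, ∫⁻ h, E h ω ∂π ∂ν :=
        lintegral_mono fun ω => lintegral_mono fun h => ENNReal.mul_div_le
    _ = ∫⁻ h, ∫⁻ ω, E h ω ∂ν ∂π :=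
        lintegral_lintegral_swap (f := fun ω h => E h ω) hE_swap.aemeasurable

lemma lintegral_prod_compProd_density [IsProbabilityMeasure ν] [SFinite π] [IsMarkovKernel κ]
    (hρ : Measurable (Function.uncurry ρ)) (hκ : ∀ ω, κ ω = π.withDensity (ρ ω)) :
    ∫⁻ p, ρ p.2.1 p.1 ∂(π.prod (ν ⊗ₘ κ)) = 1 := by
  have hdensity (ω : Ω) : ∫⁻ h, ρ ω h ∂π = 1 := by
    rw [← setLIntegral_univ, ← withDensity_apply _ MeasurableSet.univ, ← hκ ω, measure_univ]
  have hρ' : Measurable fun p : H × (Ω × H) => ρ p.2.1 p.1 :=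
    hρ.comp (measurable_snd.fst.prodMk measurable_fst)
  rw [lintegral_prod_symm _ hρ'.aemeasurable]
  simp only [hdensity, lintegral_one, measure_univ]

lemma measure_inv_sq_le_div_density_mul_density_le [IsProbabilityMeasure ν]
    [IsProbabilityMeasure π] [IsMarkovKernel κ]
    (hρ : Measurable (Function.uncurry ρ)) (hE : Measurable (Function.uncurry E))
    (hκ : ∀ ω, κ ω = π.withDensity (ρ ω)) (hE_one : ∀ h, ∫⁻ ω, E h ω ∂ν ≤ 1) (δ : ENNReal) :
    (π.prod (ν ⊗ₘ κ))
      {p | δ⁻¹ ^ 2 ≤ E p.2.2 p.2.1 / ρ p.2.1 p.2.2 * ρ p.2.1 p.1} ≤ δ := by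
  have hquot : Measurable fun x : Ω × H => E x.2 x.1 / ρ x.1 x.2 :=
    (hE.comp measurable_swap).div hρ
  have posterior_mean : ∫⁻ p, E p.2.2 p.2.1 / ρ p.2.1 p.2.2 ∂(π.prod (ν ⊗ₘ κ)) ≤ 1 :=
    calc ∫⁻ p, E p.2.2 p.2.1 / ρ p.2.1 p.2.2 ∂(π.prod (ν ⊗ₘ κ))
        = ∫⁻ x, E x.2 x.1 / ρ x.1 x.2 ∂(ν ⊗ₘ κ) :=
          measurePreserving_snd.lintegral_comp hquot
      _ ≤ ∫⁻ h, ∫⁻ ω, E h ω ∂ν ∂π := lintegral_compProd_div_density_le hρ hE hκ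
      _ ≤ ∫⁻ _, 1 ∂π := lintegral_mono hE_one
      _ = 1 := by simp
  exact measure_inv_sq_le_mul_le (hquot.comp measurable_snd).aemeasurable
    (hρ.comp (measurable_snd.fst.prodMk measurable_fst)).aemeasurable posterior_mean
    (lintegral_prod_compProd_density hρ hκ).le δ

end ChangeOfMeasure

section ExponentialMoment

lemma exp_mul_le_one_add_mul {t x : ℝ} (hx : x ∈ Set.Icc (0 : ℝ) 1) :
    Real.exp (t * x) ≤ 1 + (Real.exp t - 1) * x := by
  have chord := convexOn_exp.2 (Set.mem_univ t) (Set.mem_univ 0) hx.1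
    (sub_nonneg.2 hx.2) (add_sub_cancel _ _)
  simp only [smul_eq_mul, mul_zero, add_zero, Real.exp_zero, mul_one] at chord
  rw [mul_comm t x]
  linarith

variable {Z : Type*} [MeasurableSpace Z] {D : Measure Z}

lemma mgf_le_one_add_mul_integral [IsProbabilityMeasure D] {X : Z → ℝ}
    (hX : AEMeasurable X D) (hX01 : ∀ᵐ z ∂D, X z ∈ Set.Icc (0 : ℝ) 1) (t : ℝ) :
    mgf X D t ≤ 1 + (Real.exp t - 1) * ∫ z, X z ∂D := by
  have hX_int : Integrable X D := .of_mem_Icc 0 1 hX hX01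
  calc mgf X D t ≤ ∫ z, (1 + (Real.exp t - 1) * X z) ∂D :=
        integral_mono_ae (integrable_exp_mul_of_mem_Icc hX hX01)
          ((integrable_const 1).add (hX_int.const_mul _))
          (hX01.mono fun _ hz => exp_mul_le_one_add_mul hz)
    _ = 1 + (Real.exp t - 1) * ∫ z, X z ∂D := by
        rw [integral_add (integrable_const 1) (hX_int.const_mul _), integral_const_mul]
        simp

lemma mgf_sum_eval_pi {ι : Type*} [Fintype ι] [SigmaFinite D] (X : Z → ℝ) (t : ℝ) :
    mgf (fun S : ι → Z => ∑ i, X (S i)) (Measure.pi fun _ => D) t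
      = mgf X D t ^ Fintype.card ι := by
  simp only [mgf, Finset.mul_sum, Real.exp_sum]
  exact integral_fintype_prod_eq_pow fun z => Real.exp (t * X z)

end ExponentialMoment

section CatoniEValue

variable {Z H : Type*} [MeasurableSpace Z] {m : ℕ}

/-- Catoni's e-value for the hypothesis `h`: its expectation over an i.i.d. sample is at most `1`,
and it is large when the bound fails at `h`. The exponent is `-c * m * R_S(h)`, written without the
division in `empRisk`. -/
noncomputable def catoniEValue (D : Measure Z) (ℓ : H → Z → ℝ) (c : ℝ) (h : H)
    (S : Fin m → Z) : ℝ :=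
  Real.exp (-c * ∑ i, ℓ h (S i)) / (1 - (1 - Real.exp (-c)) * trueRisk D ℓ h) ^ m

variable {D : Measure Z} {ℓ : H → Z → ℝ} {c : ℝ}

lemma measurable_catoniEValue [MeasurableSpace H] [SFinite D]
    (hℓ : Measurable (Function.uncurry ℓ)) :
    Measurable (Function.uncurry fun h (S : Fin m → Z) => catoniEValue D ℓ c h S) := by
  have hrisk : Measurable (trueRisk D ℓ) :=
    (hℓ.stronglyMeasurable.integral_prod_right (ν := D)).measurable
  have hloss (i : Fin m) : Measurable fun x : H × (Fin m → Z) => ℓ x.1 (x.2 i) :=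
    hℓ.comp (measurable_fst.prodMk ((measurable_pi_apply i).comp measurable_snd))
  exact ((Finset.measurable_fun_sum _ fun i _ => hloss i).const_mul (-c)).exp.div
    ((((hrisk.comp measurable_fst).const_mul _).const_sub 1).pow_const m)

lemma exp_lt_catoniEValue {h : H} {S : Fin m → Z} {K : ℝ} (hm : m ≠ 0) (hc : 0 < c)
    (hpos : 0 < 1 - (1 - Real.exp (-c)) * trueRisk D ℓ h)
    (hrisk : 1 / (1 - Real.exp (-c)) * (1 - Real.exp (-c * empRisk ℓ h S - 1 / m * K))
      < trueRisk D ℓ h) :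
    Real.exp K < catoniEValue D ℓ c h S := by
  have hc' : 0 < 1 - Real.exp (-c) := by simpa using hc
  have hm' : (m : ℝ) ≠ 0 := Nat.cast_ne_zero.2 hm
  have hbase : 1 - (1 - Real.exp (-c)) * trueRisk D ℓ h
      < Real.exp (-c * empRisk ℓ h S - 1 / m * K) := by
    rw [one_div_mul_eq_div, div_lt_iff₀' hc'] at hrisk
    linarith
  rw [catoniEValue, lt_div_iff₀ (pow_pos hpos m)]
  calc Real.exp K * (1 - (1 - Real.exp (-c)) * trueRisk D ℓ h) ^ m
      < Real.exp K * Real.exp (-c * empRisk ℓ h S - 1 / m * K) ^ m := by gcongr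
    _ = Real.exp (-c * ∑ i, ℓ h (S i)) := by
        rw [← Real.exp_nat_mul, ← Real.exp_add, empRisk]
        congr 1
        field_simp
        ring

variable [IsProbabilityMeasure D] {h : H}

lemma mgf_loss_le (hℓ : AEMeasurable (ℓ h) D) (hℓ01 : ∀ᵐ z ∂D, ℓ h z ∈ Set.Icc (0 : ℝ) 1) :
    mgf (ℓ h) D (-c) ≤ 1 - (1 - Real.exp (-c)) * trueRisk D ℓ h := by
  have := mgf_le_one_add_mul_integral hℓ hℓ01 (-c)
  rw [trueRisk]
  linarith

lemma one_sub_mul_trueRisk_pos (hℓ : AEMeasurable (ℓ h) D)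
    (hℓ01 : ∀ᵐ z ∂D, ℓ h z ∈ Set.Icc (0 : ℝ) 1) :
    0 < 1 - (1 - Real.exp (-c)) * trueRisk D ℓ h :=
  (mgf_pos (integrable_exp_mul_of_mem_Icc hℓ hℓ01)).trans_le (mgf_loss_le hℓ hℓ01)

lemma lintegral_catoniEValue_le_one (hℓ : AEMeasurable (ℓ h) D)
    (hℓ01 : ∀ᵐ z ∂D, ℓ h z ∈ Set.Icc (0 : ℝ) 1) :
    ∫⁻ S : Fin m → Z, ENNReal.ofReal (catoniEValue D ℓ c h S) ∂(Measure.pi fun _ => D) ≤ 1 := by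
  have hpos : 0 < 1 - (1 - Real.exp (-c)) * trueRisk D ℓ h := one_sub_mul_trueRisk_pos hℓ hℓ01
  have hint : Integrable (fun S : Fin m → Z => catoniEValue D ℓ c h S)
      (Measure.pi fun _ => D) := by
    simp only [catoniEValue, Finset.mul_sum, Real.exp_sum]
    exact (Integrable.fintype_prod (f := fun _ z => Real.exp (-c * ℓ h z)) fun _ =>
      integrable_exp_mul_of_mem_Icc hℓ hℓ01).div_const _
  have hmean : ∫ S : Fin m → Z, catoniEValue D ℓ c h S ∂(Measure.pi fun _ => D)
      = mgf (ℓ h) D (-c) ^ m / (1 - (1 - Real.exp (-c)) * trueRisk D ℓ h) ^ m := by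
    have hsum := mgf_sum_eval_pi (ι := Fin m) (D := D) (ℓ h) (-c)
    rw [Fintype.card_fin] at hsum
    rw [← hsum, mgf, ← integral_div]
    rfl
  rw [← ofReal_integral_eq_lintegral_ofReal hint
    (ae_of_all _ fun S => div_nonneg (Real.exp_nonneg _) (pow_nonneg hpos.le m)),
    ENNReal.ofReal_le_one, hmean]
  exact div_le_one_of_le₀ (pow_le_pow_left₀ mgf_nonneg (mgf_loss_le hℓ hℓ01) m)
    (pow_nonneg hpos.le m)

end CatoniEValue

section GibbsPosterior

variable {Ω H : Type*} [MeasurableSpace H]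

/-- The density ratio `dQ_S/dP` of the Gibbs posterior for the parametric function `μ` against the
prior, both measures being given through their densities with respect to `lam`. -/
noncomputable def gibbsRatio (lam : Measure H) (P : H → ℝ) (μ : H → Ω → ℝ) (S : Ω) (h : H) : ℝ :=
  Real.exp (-(μ h S)) / (∫ g, Real.exp (-(μ g S)) ∂lam) / P h

variable {lam : Measure H} {P : H → ℝ} {μ : H → Ω → ℝ}

lemma gibbsRatio_pos {S : Ω} {h : H} (hP : 0 < P h)
    (hZ : 0 < ∫ g, Real.exp (-(μ g S)) ∂lam) : 0 < gibbsRatio lam P μ S h :=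
  div_pos (div_pos (Real.exp_pos _) hZ) hP

lemma measurable_gibbsRatio [MeasurableSpace Ω] [SFinite lam] (hP : Measurable P)
    (hμ : Measurable (Function.uncurry μ)) :
    Measurable (Function.uncurry (gibbsRatio lam P μ)) := by
  have hweight : Measurable (Function.uncurry fun g S => Real.exp (-(μ g S))) := hμ.neg.exp
  have hnormalizer : Measurable fun S => ∫ g, Real.exp (-(μ g S)) ∂lam :=
    (hweight.stronglyMeasurable.integral_prod_left (μ := lam)).measurable
  exact ((hweight.comp measurable_swap).div (hnormalizer.comp measurable_fst)).div
    (hP.comp measurable_snd)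

lemma withDensity_gibbsRatio {S : Ω} (hP : Measurable P) (hPpos : ∀ h, 0 < P h)
    (hμ : Measurable fun h => μ h S) :
    (lam.withDensity fun h => ENNReal.ofReal (P h)).withDensity
        (fun h => ENNReal.ofReal (gibbsRatio lam P μ S h))
      = lam.withDensity fun h =>
          ENNReal.ofReal (Real.exp (-(μ h S)) / ∫ g, Real.exp (-(μ g S)) ∂lam) := by
  have hratio : Measurable (gibbsRatio lam P μ S) := (hμ.neg.exp.div_const _).div hP
  rw [← withDensity_mul _ hP.ennreal_ofReal hratio.ennreal_ofReal]
  congr with h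
  rw [Pi.mul_apply, ← ENNReal.ofReal_mul (hPpos h).le, gibbsRatio,
    mul_div_cancel₀ _ (hPpos h).ne']

lemma exp_sub_add_log_eq_gibbsRatio_div {S : Ω} {h h' : H} (hP : 0 < P h) (hP' : 0 < P h')
    (hZ : 0 < ∫ g, Real.exp (-(μ g S)) ∂lam) :
    Real.exp (μ h' S - μ h S + Real.log (P h' / P h))
      = gibbsRatio lam P μ S h / gibbsRatio lam P μ S h' := by
  rw [Real.exp_add, Real.exp_log (div_pos hP' hP), Real.exp_sub, gibbsRatio, gibbsRatio,
    Real.exp_neg, Real.exp_neg]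
  field_simp

lemma inv_sq_le_div_gibbsRatio_mul_gibbsRatio {S : Ω} {h h' : H} {δ E : ℝ}
    (hP : 0 < P h) (hP' : 0 < P h') (hZ : 0 < ∫ g, Real.exp (-(μ g S)) ∂lam) (hδ : 0 < δ)
    (hE : Real.exp (μ h' S - μ h S + Real.log (P h' / P h) + Real.log (1 / δ ^ 2)) ≤ E) :
    (ENNReal.ofReal δ)⁻¹ ^ 2 ≤ ENNReal.ofReal E / ENNReal.ofReal (gibbsRatio lam P μ S h)
      * ENNReal.ofReal (gibbsRatio lam P μ S h') := by
  have hρ : 0 < gibbsRatio lam P μ S h := gibbsRatio_pos hP hZ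
  have hρ' : 0 < gibbsRatio lam P μ S h' := gibbsRatio_pos hP' hZ
  have hE_pos : 0 < E := (Real.exp_pos _).trans_le hE
  rw [Real.exp_add, exp_sub_add_log_eq_gibbsRatio_div hP hP' hZ,
    Real.exp_log (by positivity)] at hE
  rw [← ENNReal.ofReal_inv_of_pos hδ, ← ENNReal.ofReal_pow (by positivity),
    ← ENNReal.ofReal_div_of_pos hρ, ← ENNReal.ofReal_mul (by positivity)]
  refine ENNReal.ofReal_le_ofReal ?_
  calc δ⁻¹ ^ 2 = gibbsRatio lam P μ S h / gibbsRatio lam P μ S h' * (1 / δ ^ 2)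
        / gibbsRatio lam P μ S h * gibbsRatio lam P μ S h' := by field_simp
    _ ≤ E / gibbsRatio lam P μ S h * gibbsRatio lam P μ S h' := by gcongr

end GibbsPosterior

theorem catoni_gibbs_posterior_computable_bound_general
    {Z H : Type*} [MeasurableSpace Z] [MeasurableSpace H]
    (m : ℕ) (hm : 0 < m)
    (D : Measure Z) [IsProbabilityMeasure D]
    (lam : Measure H) [SFinite lam]
    (ℓ : H → Z → ℝ) (hℓ : Measurable (Function.uncurry ℓ))
    (hℓ01 : ∀ h, ∀ᵐ z ∂D, ℓ h z ∈ Set.Icc (0 : ℝ) 1)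
    (P : H → ℝ) (hPpos : ∀ h, 0 < P h) (hPmeas : Measurable P)
    (Pm : Measure H) [IsProbabilityMeasure Pm]
    (hPm : Pm = lam.withDensity fun h => ENNReal.ofReal (P h))
    (μ : H → (Fin m → Z) → ℝ) (hμ : Measurable (Function.uncurry μ))
    (hZpos : ∀ S : Fin m → Z, 0 < ∫ g, Real.exp (-(μ g S)) ∂lam)
    (κ : Kernel (Fin m → Z) H) [IsMarkovKernel κ]
    (hκ : ∀ S, κ S = lam.withDensity fun h =>
      ENNReal.ofReal (Real.exp (-(μ h S)) / ∫ g, Real.exp (-(μ g S)) ∂lam))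
    (c : ℝ) (hc : 0 < c) (δ : ℝ) (hδ : 0 < δ) :
    1 - ENNReal.ofReal δ ≤
      (Pm.prod (Measure.pi (fun _ : Fin m => D) ⊗ₘ κ))
        {p : H × ((Fin m → Z) × H) |
          trueRisk D ℓ p.2.2 ≤
            (1 / (1 - Real.exp (-c))) *
              (1 - Real.exp (-c * empRisk ℓ p.2.2 p.2.1
                - (1 / m) * (μ p.1 p.2.1 - μ p.2.2 p.2.1
                  + Real.log (P p.1 / P p.2.2) + Real.log (1 / δ ^ 2))))} := by
  have hloss (h : H) : AEMeasurable (ℓ h) D := hℓ.of_uncurry_left.aemeasurable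
  have posterior_density (S : Fin m → Z) :
      κ S = Pm.withDensity fun h => ENNReal.ofReal (gibbsRatio lam P μ S h) := by
    rw [hκ, hPm, withDensity_gibbsRatio hPmeas hPpos hμ.of_uncurry_right]
  have exceptional_le := measure_inv_sq_le_div_density_mul_density_le
    (measurable_gibbsRatio hPmeas hμ).ennreal_ofReal
    (measurable_catoniEValue (c := c) hℓ).ennreal_ofReal posterior_density
    (fun h => lintegral_catoniEValue_le_one (hloss h) (hℓ01 h)) (ENNReal.ofReal δ)
  rw [tsub_le_iff_right, ← measure_univ (μ := Pm.prod (Measure.pi (fun _ : Fin m => D) ⊗ₘ κ))]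
  refine (measure_univ_le_add_compl _).trans
    (add_le_add_right ((measure_mono fun p violated => ?_).trans exceptional_le) _)
  exact inv_sq_le_div_gibbsRatio_mul_gibbsRatio (hPpos _) (hPpos _) (hZpos _) hδ
    (exp_lt_catoniEValue hm.ne' hc (one_sub_mul_trueRisk_pos (hloss _) (hℓ01 _))
      (not_le.1 violated)).le

/-- **Computable Catoni bound with a sampled prior hypothesis.**  For any fixed
`c > 0`, with probability at least `1−δ` over `S ∼ D^m`, `h′ ∼ P` and
`h ∼ Q_S` (Gibbs posterior for `μ`),
`R_D^ℓ(h) ≤ (1/(1−e^{−c}))·{1 − exp(−c·R_S^ℓ(h)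
  − (1/m)·[μ(h′,S) − μ(h,S) + ln(P(h′)/P(h)) + ln(4/δ²)])}`. -/
theorem catoni_gibbs_posterior_computable_bound
    {Z H : Type*} [MeasurableSpace Z] [MeasurableSpace H]
    (m : ℕ) (hm : 0 < m)
    (D : Measure Z) [IsProbabilityMeasure D]
    (lam : Measure H) [SigmaFinite lam]
    (ℓ : H → Z → ℝ) (hℓ : Measurable (Function.uncurry ℓ))
    (hℓ01 : ∀ h z, ℓ h z ∈ Set.Icc (0:ℝ) 1)
    (P : H → ℝ) (hPpos : ∀ h, 0 < P h) (hPmeas : Measurable P)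
    (Pm : Measure H) [IsProbabilityMeasure Pm]
    (hPm : Pm = lam.withDensity fun h => ENNReal.ofReal (P h))
    (μ : H → (Fin m → Z) → ℝ) (hμ : Measurable (Function.uncurry μ))
    (hμint : ∀ S, Integrable (fun g => Real.exp (-(μ g S))) lam)
    (hZpos : ∀ S : Fin m → Z, 0 < ∫ g, Real.exp (-(μ g S)) ∂lam)
    (κ : Kernel (Fin m → Z) H) [IsMarkovKernel κ]
    (hκ : ∀ S, κ S = lam.withDensity fun h =>
      ENNReal.ofReal (Real.exp (-(μ h S)) / ∫ g, Real.exp (-(μ g S)) ∂lam))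
    (c : ℝ) (hc : 0 < c)
    (δ : ℝ) (hδ : δ ∈ Set.Ioc (0:ℝ) 1) :
    1 - ENNReal.ofReal δ ≤
      (Pm.prod (Measure.pi (fun _ : Fin m => D) ⊗ₘ κ))
        {p : H × ((Fin m → Z) × H) |
          trueRisk D ℓ p.2.2 ≤
            (1 / (1 - Real.exp (-c))) *
              (1 - Real.exp (-c * empRisk ℓ p.2.2 p.2.1
                - (1/m) * (μ p.1 p.2.1 - μ p.2.2 p.2.1
                  + Real.log (P p.1 / P p.2.2) + Real.log (4/δ^2)))) } := by
  rw [show 4 / δ ^ 2 = 1 / (δ / 2) ^ 2 by ring]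
  exact (tsub_le_tsub_left (ENNReal.ofReal_le_ofReal (half_le_self hδ.1.le)) 1).trans <|
    catoni_gibbs_posterior_computable_bound_general m hm D lam ℓ hℓ
      (fun h => ae_of_all _ (hℓ01 h)) P hPpos hPmeas Pm hPm μ hμ hZpos κ hκ c hc
      (δ / 2) (half_pos hδ.1)
end

section
/- Complexity-measure bound with an ε-differentially private prior: Let ℓ : H × Z → ℝ be a measurable loss, φ : ℝ² → ℝ measurable, μ : H × Z^m → ℝ a measurable parametric function with finite positive Gibbs normalizer, and S ↦ P_S an ε-differentially private randomized mechanism on H. For any probability measure D on Z and any δ ∈ (0,1], with probability at least 1−δ over S′ ∼ D^m, S ∼ D^m, h′ ∼ P_S, and h ∼ Q_S (Gibbs posterior for μ) one has φ(R_D^ℓ(h), R_S^ℓ(h)) ≤ μ(h′,S) − μ(h,S) + ln(P_S(h′)/P_S(h)) + m·ε + ln[(4/δ²)·E_{V∼D^m} E_{g∼P_{S′}} e^{φ(R_D^ℓ(g), R_V^ℓ(g))}]. -/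
open MeasureTheory ProbabilityTheory

/-!
Fix the auxiliary sample `S'`. For independent `h' ∼ P_S` and `h ∼ Q_S`, two applications of
Markov's inequality show that, outside an event of probability `δ`, the ratio `P_S(h') / Q_S(h')`
is not too small and `e^{φ(h)} P_S(h) / Q_S(h)` is not too large. Multiplying the two bounds cancels
the normalizer of the Gibbs posterior, leaving `e^{μ(h') - μ(h)} P_S(h') / P_S(h)`. Changing the
coordinates of `S` into those of `S'` one at a time gives `P_S ≤ e^{mε} P_{S'}`, which replaces the
data-dependent prior by `P_{S'}` in the exponential moment.

The densities `P_S` need not be measurable, so the events are estimated in outer measure.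
-/

open scoped ENNReal

section OuterMeasure

variable {α β : Type*} [MeasurableSpace α] [MeasurableSpace β]

lemma one_sub_le_measure_of_forall_measurableSet_subset_compl {μ : Measure α}
    [IsProbabilityMeasure μ] {s : Set α} {c : ℝ≥0∞}
    (h : ∀ t, MeasurableSet t → t ⊆ sᶜ → μ t ≤ c) : 1 - c ≤ μ s := by
  have hmeas : MeasurableSet (toMeasurable μ s) := measurableSet_toMeasurable μ s
  have hcompl : μ (toMeasurable μ s)ᶜ ≤ c :=
    h _ hmeas.compl (Set.compl_subset_compl.2 (subset_toMeasurable μ s))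
  rw [← measure_toMeasurable s, tsub_le_iff_right, ← prob_add_prob_compl (μ := μ) hmeas]
  gcongr

lemma lintegral_measure_section_le_compProd (μ : Measure α) [SFinite μ] (κ : Kernel α β)
    [IsSFiniteKernel κ] (s : Set (α × β)) :
    ∫⁻ a, κ a (Prod.mk a ⁻¹' s) ∂μ ≤ (μ ⊗ₘ κ) s :=
  Kernel.le_compProd_apply (Kernel.const Unit μ) (Kernel.prodMkLeft Unit κ) () s

lemma le_measure_prod_of_forall_le_measure_section {μ : Measure α} [IsProbabilityMeasure μ]
    {ν : Measure β} [SFinite ν] {s : Set (α × β)} {c : ℝ≥0∞}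
    (h : ∀ a, c ≤ ν (Prod.mk a ⁻¹' s)) : c ≤ (μ.prod ν) s :=
  calc c = ∫⁻ _, c ∂μ := by simp
    _ ≤ ∫⁻ a, ν (Prod.mk a ⁻¹' s) ∂μ := lintegral_mono h
    _ ≤ (μ.prod ν) s := by
      simpa using lintegral_measure_section_le_compProd μ (Kernel.const α ν) s

lemma lintegral_pos_of_forall_pos {μ : Measure α} [NeZero μ] {f : α → ℝ≥0∞}
    (hf : Measurable f) (hpos : ∀ x, 0 < f x) : 0 < ∫⁻ x, f x ∂μ := by
  have hsupp : Function.support f = Set.univ := Set.eq_univ_of_forall fun x => (hpos x).ne'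
  rw [lintegral_pos_iff_support hf, hsupp]
  exact NeZero.pos _

end OuterMeasure

section NonmeasurableDensity

variable {α : Type*} [MeasurableSpace α] {lam : Measure α} {f g p q u : α → ℝ≥0∞} {c d : ℝ≥0∞}

lemma withDensity_le_smul_of_ae_le_mul (hc : c ≠ ∞)
    (h : ∀ᵐ x ∂lam.withDensity f, f x ≤ c * g x) :
    lam.withDensity f ≤ c • lam.withDensity g := by
  obtain ⟨N, hbad, hN, hN0⟩ := exists_measurable_superset_of_null (ae_iff.1 h)
  refine Measure.le_iff.2 fun s hs => ?_
  calc lam.withDensity f s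
      = lam.withDensity f (s \ N) := (measure_sdiff_null hN0).symm
    _ = ∫⁻ x in s \ N, f x ∂lam := withDensity_apply _ (hs.diff hN)
    _ ≤ ∫⁻ x in s \ N, c * g x ∂lam :=
        setLIntegral_mono' (hs.diff hN) fun x hx => not_not.1 fun hlt => hx.2 (hbad hlt)
    _ = c * lam.withDensity g (s \ N) := by
        rw [lintegral_const_mul' _ _ hc, withDensity_apply _ (hs.diff hN)]
    _ ≤ c * lam.withDensity g s := by gcongr; exact Set.sdiff_subset

lemma withDensity_le_smul_of_essSup_div_le (hc : c ≠ ∞) (hg : ∀ x, g x ≠ ∞)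
    (h : essSup (fun x => f x / g x) (lam.withDensity f) ≤ c) :
    lam.withDensity f ≤ c • lam.withDensity g := by
  refine withDensity_le_smul_of_ae_le_mul hc ?_
  filter_upwards [ENNReal.ae_le_essSup fun x => f x / g x] with x hx
  exact (ENNReal.div_le_iff_le_mul (Or.inr hc) (Or.inl (hg x))).1 (hx.trans h)

lemma setLIntegral_mul_le_lintegral_withDensity (hu : Measurable u) (hutop : ∀ x, u x ≠ ∞)
    {s : Set α} (hs : MeasurableSet s) :
    ∫⁻ x in s, u x * p x ∂lam ≤ ∫⁻ x, u x ∂lam.withDensity p := by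
  obtain ⟨w, hw, hwle, hweq⟩ :=
    exists_measurable_le_lintegral_eq (lam.restrict s) fun x => u x * p x
  have hdiv_mul : ∀ x, w x / u x * u x = w x := fun x =>
    ENNReal.div_mul_cancel' (fun hux => by simpa [hux] using hwle x)
      fun hux => absurd hux (hutop x)
  have hdiv_le : ∀ x, w x / u x ≤ p x := fun x =>
    ENNReal.div_le_of_le_mul' (hwle x)
  calc ∫⁻ x in s, u x * p x ∂lam
      = ∫⁻ x in s, w x / u x * u x ∂lam := by simp only [hweq, hdiv_mul]
    _ = ∫⁻ x in s, u x ∂lam.withDensity fun x => w x / u x := by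
        rw [restrict_withDensity hs]
        exact (lintegral_withDensity_eq_lintegral_mul _ (hw.div hu) hu).symm
    _ ≤ ∫⁻ x in s, u x ∂lam.withDensity p := by
        gcongr
        exact withDensity_mono (.of_forall hdiv_le)
    _ ≤ ∫⁻ x, u x ∂lam.withDensity p := setLIntegral_le_lintegral _ _

-- Markov's inequality for `u * p / q`, whose mean under the density `q` is the mean of `u`
-- under the density `p`.
lemma one_sub_lintegral_le_withDensity_setOf_mul_lt [IsProbabilityMeasure (lam.withDensity q)]
    (hu : Measurable u) (hutop : ∀ x, u x ≠ ∞) :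
    1 - ∫⁻ x, u x ∂lam.withDensity p ≤ lam.withDensity q {x | u x * p x < q x} := by
  refine one_sub_le_measure_of_forall_measurableSet_subset_compl fun t ht htsub => ?_
  calc lam.withDensity q t
      = ∫⁻ x in t, q x ∂lam := withDensity_apply _ ht
    _ ≤ ∫⁻ x in t, u x * p x ∂lam := setLIntegral_mono' ht fun x hx => not_lt.1 (htsub hx)
    _ ≤ ∫⁻ x, u x ∂lam.withDensity p := setLIntegral_mul_le_lintegral_withDensity hu hutop ht

lemma one_sub_add_le_one_sub_mul_one_sub (a b : ℝ≥0∞) : 1 - (a + b) ≤ (1 - a) * (1 - b) := by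
  have hmul_le : (1 - a) * b ≤ b := mul_le_of_le_one_left' tsub_le_self
  calc 1 - (a + b) = (1 - a) - b := (tsub_tsub _ _ _).symm
    _ ≤ (1 - a) - (1 - a) * b := tsub_le_tsub_left hmul_le _
    _ = (1 - a) * (1 - b) := by
        rw [ENNReal.mul_sub fun _ _ => ne_top_of_le_ne_top ENNReal.one_ne_top tsub_le_self, mul_one]

lemma one_sub_le_prod_withDensity_setOf_mul_lt_and_mul_lt
    [IsProbabilityMeasure (lam.withDensity p)] [IsProbabilityMeasure (lam.withDensity q)]
    (hd : d ≠ ∞) (hu : Measurable u) (hutop : ∀ x, u x ≠ ∞) :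
    1 - (d + ∫⁻ x, u x ∂lam.withDensity p) ≤
      ((lam.withDensity p).prod (lam.withDensity q))
        {z | d * q z.1 < p z.1 ∧ u z.2 * p z.2 < q z.2} := by
  have hfst : 1 - d ≤ lam.withDensity p {x | d * q x < p x} := by
    simpa using one_sub_lintegral_le_withDensity_setOf_mul_lt (lam := lam) (p := q) (q := p)
      (u := fun _ => d) measurable_const fun _ => hd
  calc 1 - (d + ∫⁻ x, u x ∂lam.withDensity p)
      ≤ (1 - d) * (1 - ∫⁻ x, u x ∂lam.withDensity p) := one_sub_add_le_one_sub_mul_one_sub _ _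
    _ ≤ lam.withDensity p {x | d * q x < p x} * lam.withDensity q {x | u x * p x < q x} :=
        mul_le_mul' hfst (one_sub_lintegral_le_withDensity_setOf_mul_lt hu hutop)
    _ = ((lam.withDensity p).prod (lam.withDensity q))
          ({x | d * q x < p x} ×ˢ {x | u x * p x < q x}) := (Measure.prod_prod _ _).symm

end NonmeasurableDensity

lemma one_sub_le_compProd_setOf_mul_lt_and_mul_lt {X H : Type*} [MeasurableSpace X]
    [MeasurableSpace H] {π : Measure X} [IsProbabilityMeasure π] {lam : Measure H}
    {p q u : X → H → ℝ≥0∞} {d : ℝ≥0∞} {κP κQ : Kernel X H} [IsMarkovKernel κP] [IsMarkovKernel κQ]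
    (hκP : ∀ S, κP S = lam.withDensity (p S)) (hκQ : ∀ S, κQ S = lam.withDensity (q S))
    (hd : d ≠ ∞) (hu : Measurable (Function.uncurry u)) (hutop : ∀ S h, u S h ≠ ∞) :
    1 - (d + ∫⁻ S, ∫⁻ g, u S g ∂κP S ∂π) ≤
      (π ⊗ₘ (κP ×ₖ κQ)) {z | d * q z.1 z.2.1 < p z.1 z.2.1 ∧
        u z.1 z.2.2 * p z.1 z.2.2 < q z.1 z.2.2} := by
  have hmean : Measurable fun S => ∫⁻ g, u S g ∂κP S := hu.lintegral_kernel_prod_right'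
  have hsection (S : X) : 1 - (d + ∫⁻ g, u S g ∂κP S) ≤
      (κP ×ₖ κQ) S {z | d * q S z.1 < p S z.1 ∧ u S z.2 * p S z.2 < q S z.2} := by
    have : IsProbabilityMeasure (lam.withDensity (p S)) := hκP S ▸ inferInstance
    have : IsProbabilityMeasure (lam.withDensity (q S)) := hκQ S ▸ inferInstance
    rw [Kernel.prod_apply, hκP, hκQ]
    exact one_sub_le_prod_withDensity_setOf_mul_lt_and_mul_lt hd hu.of_uncurry_left (hutop S)
  calc 1 - (d + ∫⁻ S, ∫⁻ g, u S g ∂κP S ∂π)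
      = ∫⁻ _, 1 ∂π - ∫⁻ S, (d + ∫⁻ g, u S g ∂κP S) ∂π := by
        simp [lintegral_add_left measurable_const]
    _ ≤ ∫⁻ S, (1 - (d + ∫⁻ g, u S g ∂κP S)) ∂π := lintegral_sub_le _ _ (hmean.const_add d)
    _ ≤ _ := (lintegral_mono hsection).trans (lintegral_measure_section_le_compProd _ _ _)

section Privacy

variable {ι Z H : Type*} [Fintype ι] [MeasurableSpace H]

lemma le_pow_card_smul_of_forall_le_smul {κ : (ι → Z) → Measure H} {c : ℝ≥0∞}
    (hκ : ∀ T T' : ι → Z, (∃ j, ∀ i, i ≠ j → T i = T' i) → κ T' ≤ c • κ T) (S S' : ι → Z) :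
    κ S ≤ c ^ Fintype.card ι • κ S' := by
  classical
  have hpiecewise (s : Finset ι) : κ (s.piecewise S S') ≤ c ^ s.card • κ S' := by
    induction s using Finset.induction_on with
    | empty => simp
    | insert j s hj ih =>
      have hstep : κ ((insert j s).piecewise S S') ≤ c • κ (s.piecewise S S') := by
        refine hκ _ _ ⟨j, fun i hij => ?_⟩
        exact (Finset.piecewise_insert_of_ne _ _ _ hij).symm
      calc κ ((insert j s).piecewise S S') ≤ c • κ (s.piecewise S S') := hstep
        _ ≤ c • c ^ s.card • κ S' := by gcongr
        _ = c ^ (insert j s).card • κ S' := by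
          rw [smul_smul, Finset.card_insert_of_notMem hj, pow_succ']
  simpa using hpiecewise Finset.univ

lemma le_exp_card_mul_smul_of_essSup_density_ratio_le {lam : Measure H} {P : (ι → Z) → H → ℝ}
    (hP : ∀ S h, 0 < P S h) {κ : (ι → Z) → Measure H}
    (hκ : ∀ S, κ S = lam.withDensity fun h => ENNReal.ofReal (P S h)) {ε : ℝ}
    (hDP : ∀ T T' : ι → Z, (∃ j, ∀ i, i ≠ j → T i = T' i) →
      essSup (fun h => ENNReal.ofReal (P T' h / P T h)) (κ T') ≤ ENNReal.ofReal (Real.exp ε))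
    (S S' : ι → Z) :
    κ S ≤ ENNReal.ofReal (Real.exp (Fintype.card ι * ε)) • κ S' := by
  rw [Real.exp_nat_mul, ENNReal.ofReal_pow (Real.exp_pos ε).le]
  refine le_pow_card_smul_of_forall_le_smul (fun T T' hTT' => ?_) S S'
  have hratio := hDP T T' hTT'
  simp only [ENNReal.ofReal_div_of_pos (hP T _), hκ T'] at hratio
  rw [hκ T, hκ T']
  exact withDensity_le_smul_of_essSup_div_le ENNReal.ofReal_ne_top
    (fun _ => ENNReal.ofReal_ne_top) hratio

end Privacy

section GibbsPosterior

lemma lt_add_log_div_sub_log_mul_of_gibbs_density_bounds {t a a' p p' N c d : ℝ} (hp : 0 < p)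
    (hp' : 0 < p') (hN : 0 < N) (hc : 0 < c) (hd : 0 < d)
    (hlower : d * (Real.exp (-a') / N) < p') (hupper : c * Real.exp t * p < Real.exp (-a) / N) :
    t < a' - a + Real.log (p' / p) - Real.log (c * d) := by
  have hlog_lower := Real.log_lt_log (by positivity) hlower
  have hlog_upper := Real.log_lt_log (by positivity) hupper
  rw [Real.log_mul, Real.log_div, Real.log_exp] at hlog_lower <;> try positivity
  rw [Real.log_mul, Real.log_mul, Real.log_div, Real.log_exp, Real.log_exp] at hlog_upper <;>
    try positivity
  rw [Real.log_div hp'.ne' hp.ne', Real.log_mul hc.ne' hd.ne']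
  linarith

lemma log_div_two_mul_exp_mul_mul_half {δ x r : ℝ} (hδ : 0 < δ) (hx : 0 < x) :
    Real.log (δ / (2 * Real.exp r * x) * (δ / 2)) = -(r + Real.log (4 / δ ^ 2 * x)) := by
  have hinv : δ / (2 * Real.exp r * x) * (δ / 2) = (Real.exp r * (4 / δ ^ 2 * x))⁻¹ := by field
  rw [hinv, Real.log_inv, Real.log_mul (by positivity) (by positivity), Real.log_exp]

variable {X H : Type*} [MeasurableSpace X] [MeasurableSpace H] {π : Measure X} {lam ν : Measure H}
  {κP κQ : Kernel X H}

lemma lintegral_lintegral_const_mul_le_of_forall_le_smul {f : X → H → ℝ≥0∞} {a c : ℝ≥0∞}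
    (ha : a ≠ ∞) (hc : c ≠ ∞) (hdom : ∀ S, κP S ≤ c • ν) :
    ∫⁻ S, ∫⁻ g, a * f S g ∂κP S ∂π ≤ c * (a * ∫⁻ S, ∫⁻ g, f S g ∂ν ∂π) :=
  calc ∫⁻ S, ∫⁻ g, a * f S g ∂κP S ∂π
      ≤ ∫⁻ S, ∫⁻ g, a * f S g ∂(c • ν) ∂π :=
        lintegral_mono fun S => lintegral_mono' (hdom S) le_rfl
    _ = c * (a * ∫⁻ S, ∫⁻ g, f S g ∂ν ∂π) := by
        simp only [lintegral_smul_measure, smul_eq_mul, lintegral_const_mul' _ _ hc,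
          lintegral_const_mul' _ _ ha]
        exact mul_left_comm _ _ _

variable [IsProbabilityMeasure π] [IsMarkovKernel κP] [IsMarkovKernel κQ] {F μ : H → X → ℝ}
  {P : X → H → ℝ} {r δ : ℝ}

lemma complexity_bound_of_lintegral_exp_le (hF : Measurable (Function.uncurry F))
    (hP : ∀ S h, 0 < P S h)
    (hκP : ∀ S, κP S = lam.withDensity fun h => ENNReal.ofReal (P S h))
    (hdom : ∀ S, κP S ≤ ENNReal.ofReal (Real.exp r) • ν)
    (hZpos : ∀ S, 0 < ∫ g, Real.exp (-(μ g S)) ∂lam)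
    (hκQ : ∀ S, κQ S = lam.withDensity fun h =>
      ENNReal.ofReal (Real.exp (-(μ h S)) / ∫ g, Real.exp (-(μ g S)) ∂lam))
    (hδ : 0 < δ) {x : ℝ} (hx : 0 < x)
    (hmoment : ∫⁻ V, ∫⁻ g, ENNReal.ofReal (Real.exp (F g V)) ∂ν ∂π ≤ ENNReal.ofReal x) :
    1 - ENNReal.ofReal δ ≤ (π ⊗ₘ (κP ×ₖ κQ)) {z | F z.2.2 z.1 ≤
      μ z.2.1 z.1 - μ z.2.2 z.1 + Real.log (P z.1 z.2.1 / P z.1 z.2.2) + r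
        + Real.log (4 / δ ^ 2 * x)} := by
  -- The scale for which the mean of `c * exp F` under the prior is at most `δ / 2`.
  set c : ℝ := δ / (2 * Real.exp r * x) with hc_def
  have hc : 0 < c := by positivity
  set u : X → H → ℝ≥0∞ := fun S g =>
    ENNReal.ofReal c * ENNReal.ofReal (Real.exp (F g S)) with hu_def
  have hu : Measurable (Function.uncurry u) :=
    (hF.comp measurable_swap).exp.ennreal_ofReal.const_mul _
  have hmean : ∫⁻ S, ∫⁻ g, u S g ∂κP S ∂π ≤ ENNReal.ofReal (δ / 2) := by
    calc ∫⁻ S, ∫⁻ g, u S g ∂κP S ∂π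
        ≤ ENNReal.ofReal (Real.exp r) * (ENNReal.ofReal c *
            ∫⁻ V, ∫⁻ g, ENNReal.ofReal (Real.exp (F g V)) ∂ν ∂π) :=
          lintegral_lintegral_const_mul_le_of_forall_le_smul ENNReal.ofReal_ne_top
            ENNReal.ofReal_ne_top hdom
      _ ≤ ENNReal.ofReal (Real.exp r) * (ENNReal.ofReal c * ENNReal.ofReal x) := by gcongr
      _ = ENNReal.ofReal (δ / 2) := by
          rw [← ENNReal.ofReal_mul hc.le, ← ENNReal.ofReal_mul (Real.exp_pos r).le, hc_def]
          congr 1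
          field
  calc 1 - ENNReal.ofReal δ
      = 1 - (ENNReal.ofReal (δ / 2) + ENNReal.ofReal (δ / 2)) := by
        rw [← ENNReal.ofReal_add (by positivity) (by positivity), add_halves]
    _ ≤ 1 - (ENNReal.ofReal (δ / 2) + ∫⁻ S, ∫⁻ g, u S g ∂κP S ∂π) := by gcongr
    _ ≤ _ := one_sub_le_compProd_setOf_mul_lt_and_mul_lt hκP hκQ ENNReal.ofReal_ne_top hu
        fun _ _ => ENNReal.mul_ne_top ENNReal.ofReal_ne_top ENNReal.ofReal_ne_top
    _ ≤ _ := measure_mono ?_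
  rintro ⟨S, h', h⟩ ⟨hlower, hupper⟩
  simp only [hu_def, ← ENNReal.ofReal_mul hc.le, ← ENNReal.ofReal_mul (half_pos hδ).le,
    ← ENNReal.ofReal_mul (mul_pos hc (Real.exp_pos _)).le] at hlower hupper
  have hbound := lt_add_log_div_sub_log_mul_of_gibbs_density_bounds (hP S h) (hP S h') (hZpos S) hc
    (half_pos hδ) (ENNReal.ofReal_lt_ofReal_iff'.1 hlower).1
    (ENNReal.ofReal_lt_ofReal_iff'.1 hupper).1
  rw [hc_def, log_div_two_mul_exp_mul_mul_half hδ hx] at hbound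
  simp only [Set.mem_ofPred_eq]
  linarith

lemma complexity_bound_of_prior_le_smul [SFinite ν] [NeZero ν]
    (hF : Measurable (Function.uncurry F)) (hP : ∀ S h, 0 < P S h)
    (hκP : ∀ S, κP S = lam.withDensity fun h => ENNReal.ofReal (P S h))
    (hdom : ∀ S, κP S ≤ ENNReal.ofReal (Real.exp r) • ν)
    (hZpos : ∀ S, 0 < ∫ g, Real.exp (-(μ g S)) ∂lam)
    (hκQ : ∀ S, κQ S = lam.withDensity fun h =>
      ENNReal.ofReal (Real.exp (-(μ h S)) / ∫ g, Real.exp (-(μ g S)) ∂lam))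
    (hδ : 0 < δ) :
    1 - ENNReal.ofReal δ ≤ (π ⊗ₘ (κP ×ₖ κQ)) {z | (F z.2.2 z.1 : EReal) ≤
      ((μ z.2.1 z.1 - μ z.2.2 z.1 + Real.log (P z.1 z.2.1 / P z.1 z.2.2) + r : ℝ) : EReal)
        + ENNReal.log (ENNReal.ofReal (4 / δ ^ 2) *
            ∫⁻ V, ∫⁻ g, ENNReal.ofReal (Real.exp (F g V)) ∂ν ∂π)} := by
  set ξ : ℝ≥0∞ := ∫⁻ V, ∫⁻ g, ENNReal.ofReal (Real.exp (F g V)) ∂ν ∂π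
  have hcoeff : 0 < 4 / δ ^ 2 := by positivity
  rcases eq_or_ne ξ ∞ with hξ | hξ
  · simp only [hξ, ENNReal.mul_top (ENNReal.ofReal_pos.2 hcoeff).ne', ENNReal.log_top,
      EReal.coe_add_top, le_top, Set.ofPred_true, measure_univ, tsub_le_self]
  · have hu : Measurable fun z : X × H => ENNReal.ofReal (Real.exp (F z.2 z.1)) :=
      (hF.comp measurable_swap).exp.ennreal_ofReal
    have hξpos : 0 < ξ := lintegral_pos_of_forall_pos hu.lintegral_prod_right' fun V =>
      lintegral_pos_of_forall_pos (hu.comp measurable_prodMk_left) fun g =>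
        ENNReal.ofReal_pos.2 (Real.exp_pos _)
    have hx : 0 < ξ.toReal := ENNReal.toReal_pos hξpos.ne' hξ
    have hlog : ENNReal.log (ENNReal.ofReal (4 / δ ^ 2) * ξ) =
        (Real.log (4 / δ ^ 2 * ξ.toReal) : ℝ) := by
      rw [← ENNReal.log_ofReal_of_pos (mul_pos hcoeff hx), ENNReal.ofReal_mul hcoeff.le,
        ENNReal.ofReal_toReal hξ]
    simp only [hlog, ← EReal.coe_add, EReal.coe_le_coe_iff]
    exact complexity_bound_of_lintegral_exp_le hF hP hκP hdom hZpos hκQ hδ hx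
      (ENNReal.ofReal_toReal hξ).ge

end GibbsPosterior

lemma measurable_trueRisk {Z H : Type*} [MeasurableSpace Z] [MeasurableSpace H] {D : Measure Z}
    [SFinite D] {ℓ : H → Z → ℝ} (hℓ : Measurable (Function.uncurry ℓ)) :
    Measurable (trueRisk D ℓ) :=
  hℓ.stronglyMeasurable.integral_prod_right.measurable

lemma measurable_uncurry_empRisk {Z H : Type*} [MeasurableSpace Z] [MeasurableSpace H] {m : ℕ}
    {ℓ : H → Z → ℝ} (hℓ : Measurable (Function.uncurry ℓ)) :
    Measurable (Function.uncurry (empRisk (m := m) ℓ)) := by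
  refine (Finset.measurable_sum _ fun i _ => ?_).div_const _
  exact hℓ.comp (measurable_fst.prodMk ((measurable_pi_apply i).comp measurable_snd))

lemma measurable_uncurry_comp_risks {Z H : Type*} [MeasurableSpace Z] [MeasurableSpace H] {m : ℕ}
    {D : Measure Z} [SFinite D] {ℓ : H → Z → ℝ} (hℓ : Measurable (Function.uncurry ℓ))
    {φ : ℝ → ℝ → ℝ} (hφ : Measurable (Function.uncurry φ)) :
    Measurable (Function.uncurry fun h (S : Fin m → Z) => φ (trueRisk D ℓ h) (empRisk ℓ h S)) :=
  hφ.comp (((measurable_trueRisk hℓ).comp measurable_fst).prodMk (measurable_uncurry_empRisk hℓ))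

theorem complexity_bound_with_dp_prior_general {ι Z H : Type*} [Fintype ι] [MeasurableSpace Z]
    [MeasurableSpace H] {π : Measure (ι → Z)} [IsProbabilityMeasure π] {lam : Measure H}
    {F : H → (ι → Z) → ℝ} (hF : Measurable (Function.uncurry F))
    {P : (ι → Z) → H → ℝ} (hP : ∀ S h, 0 < P S h) {κP κQ : Kernel (ι → Z) H} [IsMarkovKernel κP]
    (hκP : ∀ S, κP S = lam.withDensity fun h => ENNReal.ofReal (P S h)) {ε : ℝ}
    (hDP : ∀ T T' : ι → Z, (∃ j, ∀ i, i ≠ j → T i = T' i) →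
      essSup (fun h => ENNReal.ofReal (P T' h / P T h)) (κP T') ≤ ENNReal.ofReal (Real.exp ε))
    {μ : H → (ι → Z) → ℝ} (hZpos : ∀ S, 0 < ∫ g, Real.exp (-(μ g S)) ∂lam) [IsMarkovKernel κQ]
    (hκQ : ∀ S, κQ S = lam.withDensity fun h =>
      ENNReal.ofReal (Real.exp (-(μ h S)) / ∫ g, Real.exp (-(μ g S)) ∂lam))
    {δ : ℝ} (hδ : 0 < δ) (S' : ι → Z) :
    1 - ENNReal.ofReal δ ≤ (π ⊗ₘ (κP ×ₖ κQ)) {z | (F z.2.2 z.1 : EReal) ≤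
      ((μ z.2.1 z.1 - μ z.2.2 z.1 + Real.log (P z.1 z.2.1 / P z.1 z.2.2)
          + Fintype.card ι * ε : ℝ) : EReal)
        + ENNReal.log (ENNReal.ofReal (4 / δ ^ 2) *
            ∫⁻ V, ∫⁻ g, ENNReal.ofReal (Real.exp (F g V)) ∂κP S' ∂π)} :=
  complexity_bound_of_prior_le_smul hF hP hκP
    (fun S => le_exp_card_mul_smul_of_essSup_density_ratio_le hP hκP hDP S S') hZpos hκQ hδ

/-- **Complexity-measure bound with an ε-differentially private prior.**
With probability at least `1−δ` over `S′ ∼ D^m`, `S ∼ D^m`, `h′ ∼ P_S` and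
`h ∼ Q_S` (Gibbs posterior for `μ`),
`φ(R_D^ℓ(h), R_S^ℓ(h)) ≤ μ(h′,S) − μ(h,S) + ln(P_S(h′)/P_S(h)) + m·ε
  + ln[(4/δ²)·E_{V∼D^m} E_{g∼P_{S′}} e^{φ(R_D^ℓ(g), R_V^ℓ(g))}]`
(stated in `EReal`). -/
theorem complexity_bound_with_dp_prior
    {Z H : Type*} [MeasurableSpace Z] [MeasurableSpace H]
    (m : ℕ) (hm : 0 < m)
    (D : Measure Z) [IsProbabilityMeasure D]
    (lam : Measure H) [SigmaFinite lam]
    (ℓ : H → Z → ℝ) (hℓ : Measurable (Function.uncurry ℓ))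
    (φ : ℝ → ℝ → ℝ) (hφ : Measurable (Function.uncurry φ))
    -- the randomized prior mechanism, with strictly positive densities
    (Pd : (Fin m → Z) → H → ℝ) (hPdpos : ∀ S h, 0 < Pd S h)
    (κP : Kernel (Fin m → Z) H) [IsMarkovKernel κP]
    (hκP : ∀ S, κP S = lam.withDensity fun h => ENNReal.ofReal (Pd S h))
    (ε : ℝ) (hε : 0 ≤ ε)
    -- ε-differential privacy of the mechanism
    (hDP : ∀ T T' : Fin m → Z, (∃ j : Fin m, ∀ i, i ≠ j → T i = T' i) →
      essSup (fun h => ENNReal.ofReal (Pd T' h / Pd T h)) (κP T') ≤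
        ENNReal.ofReal (Real.exp ε))
    -- the Gibbs posterior for `μ`
    (μ : H → (Fin m → Z) → ℝ) (hμ : Measurable (Function.uncurry μ))
    (hμint : ∀ S, Integrable (fun g => Real.exp (-(μ g S))) lam)
    (hZpos : ∀ S : Fin m → Z, 0 < ∫ g, Real.exp (-(μ g S)) ∂lam)
    (κQ : Kernel (Fin m → Z) H) [IsMarkovKernel κQ]
    (hκQ : ∀ S, κQ S = lam.withDensity fun h =>
      ENNReal.ofReal (Real.exp (-(μ h S)) / ∫ g, Real.exp (-(μ g S)) ∂lam))
    (δ : ℝ) (hδ : δ ∈ Set.Ioc (0:ℝ) 1) :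
    1 - ENNReal.ofReal δ ≤
      ((Measure.pi (fun _ : Fin m => D)).prod
          (Measure.pi (fun _ : Fin m => D) ⊗ₘ (κP ×ₖ κQ)))
        {p : (Fin m → Z) × ((Fin m → Z) × (H × H)) |
          (φ (trueRisk D ℓ p.2.2.2) (empRisk ℓ p.2.2.2 p.2.1) : EReal) ≤
            ((μ p.2.2.1 p.2.1 - μ p.2.2.2 p.2.1
                + Real.log (Pd p.2.1 p.2.2.1 / Pd p.2.1 p.2.2.2)
                + m * ε : ℝ) : EReal)
            + ENNReal.log (ENNReal.ofReal (4/δ^2) *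
                ∫⁻ V, ∫⁻ g, ENNReal.ofReal
                    (Real.exp (φ (trueRisk D ℓ g) (empRisk ℓ g V))) ∂(κP p.1)
                  ∂(Measure.pi (fun _ : Fin m => D))) } := by
  refine le_measure_prod_of_forall_le_measure_section fun S' => ?_
  simpa only [Fintype.card_fin, Set.preimage_ofPred_eq] using complexity_bound_with_dp_prior_general
    (measurable_uncurry_comp_risks hℓ hφ) hPdpos hκP hDP hZpos hκQ hδ.1 S'
end
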